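/- Let d ≥ 2, q > 2, T > 0, and λ₀, λ₁, λ₂ ∈ 2^ℤ. Then ‖ |D| √K P_{λ₀} ( 𝓡 √K u_{λ₁} · 𝓡 √K v_{λ₂} ) ‖_{L^1_T L^2_x} ≲ T^{1−1/q} · ⟨λ₀⟩^{1/2} · min(⟨λ₁⟩, ⟨λ₂⟩)^{d/2 − 1/(2q)} · ⟨λ₁⟩^{−1/2} ⟨λ₂⟩^{−1/2} · ‖u‖_{X_{λ₁}} ‖v‖_{X_{λ₂}} for all u ∈ X_{λ₁} and v ∈ X_{λ₂}, where u_{λ} = P_λ u, and the implicit constant is independent of T and the λ's. -/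

import Mathlib

noncomputable section

open MeasureTheory Complex Real
open scoped FourierTransform ENNReal

/-- Euclidean space `ℝ^d`. -/
abbrev Euc (d : ℕ) := EuclideanSpace ℝ (Fin d)

/-- Japanese bracket `⟨x⟩ = (1+|x|²)^{1/2}`. -/
def jap (x : ℝ) : ℝ := Real.sqrt (1 + x ^ 2)

/-- The symbol `m_β(r) = √(r(1+βr²)tanh r)`. -/
def mSymb (β r : ℝ) : ℝ := Real.sqrt (r * (1 + β * r ^ 2) * Real.tanh r)

/-- The constant `c_{β,d}(λ) = λ^{d/2-1}⟨√β λ⟩^{-d/2}⟨λ⟩^{d/4+1}`. -/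
def cFactor (β : ℝ) (d : ℕ) (lam : ℝ) : ℝ :=
  lam ^ ((d : ℝ) / 2 - 1) * jap (Real.sqrt β * lam) ^ (-(d : ℝ) / 2) *
    jap lam ^ ((d : ℝ) / 4 + 1)

/-- `χ ∈ C_0^∞(ℝ)`, `0 ≤ χ ≤ 1`, `χ ≡ 1` on `[-1,1]`, `supp χ ⊆ [-2,2]`. -/
def IsCutoff (χ : ℝ → ℝ) : Prop :=
  ContDiff ℝ (⊤ : ℕ∞) χ ∧ HasCompactSupport χ ∧ (∀ s, 0 ≤ χ s ∧ χ s ≤ 1) ∧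
    (∀ s ∈ Set.Icc (-1 : ℝ) 1, χ s = 1) ∧ Function.support χ ⊆ Set.Icc (-2 : ℝ) 2

/-- `ρ(s) = χ(s) - χ(2s)`. -/
def rho (χ : ℝ → ℝ) (s : ℝ) : ℝ := χ s - χ (2 * s)

/-- Fourier multiplier operator with symbol `m`. -/
def mulOp {d : ℕ} (m : Euc d → ℂ) (f : Euc d → ℂ) : Euc d → ℂ :=
  𝓕⁻ fun ξ => m ξ * 𝓕 f ξ

/-- The Littlewood–Paley type projection `P_λ` with multiplier `ρ(|ξ|/λ)`. -/
def proj {d : ℕ} (χ : ℝ → ℝ) (lam : ℝ) (f : Euc d → ℂ) : Euc d → ℂ :=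
  mulOp (fun ξ => (rho χ (‖ξ‖ / lam) : ℂ)) f

/-- The propagator `S_{m_β}(t) = exp(-it m_β(D))`, so that `S_{m_β}(±t) = prop β (±t)`. -/
def propg (β : ℝ) {d : ℕ} (t : ℝ) (f : Euc d → ℂ) : Euc d → ℂ :=
  mulOp (fun ξ => Complex.exp (-Complex.I * (t * mSymb β ‖ξ‖))) f

/-- The symbol `K(ξ) = tanh|ξ|/|ξ|`. -/
def Ksym {d : ℕ} (ξ : Euc d) : ℝ := Real.tanh ‖ξ‖ / ‖ξ‖

/-- The `j`-th Riesz symbol `ξ_j/|ξ|`. -/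
def rzSym {d : ℕ} (j : Fin d) (ξ : Euc d) : ℝ := ξ j / ‖ξ‖

/-- The dyadic norm `‖u‖_{X_λ} = (‖P_λ u‖²_{L^∞_T L^2_x}
+ ⟨λ⟩^{-3/q} ‖P_λ u‖²_{L^q_T L^r_x})^{1/2}` with `r = 2qd/(qd-4)`. -/
def XlamNorm {d : ℕ} (χ : ℝ → ℝ) (T q lam : ℝ) (u : ℝ → Euc d → ℂ) : ℝ≥0∞ :=
  (essSup (fun t => eLpNorm (proj χ lam (u t)) 2 volume)
      (volume.restrict (Set.Ioc (0 : ℝ) T)) ^ 2 +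
    ENNReal.ofReal (jap lam ^ (-3 / q)) *
      ((∫⁻ t in Set.Ioc (0 : ℝ) T,
          eLpNorm (proj χ lam (u t))
              (ENNReal.ofReal (2 * q * d / (q * d - 4))) volume ^ q) ^ (1 / q)) ^ 2) ^
    ((1 : ℝ) / 2)

/-- The norm `‖u‖_{X^s_T} = (Σ_{λ ∈ 2^ℤ} ⟨λ⟩^{2s} ‖u‖²_{X_λ})^{1/2}`. -/
def XsNorm {d : ℕ} (χ : ℝ → ℝ) (T q s : ℝ) (u : ℝ → Euc d → ℂ) : ℝ≥0∞ :=
  (∑' n : ℤ, ENNReal.ofReal (jap ((2 : ℝ) ^ n) ^ (2 * s)) *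
      XlamNorm χ T q ((2 : ℝ) ^ n) u ^ 2) ^ ((1 : ℝ) / 2)

/-!
Write `r = 2qd/(qd - 4)`. At a fixed time the factor of lower frequency, say `λ₁`, is put in
`L^∞_x` and the other one in `L^2_x`. On the frequency support of `P_λ` the symbol of `|D| √K` is
of size `⟨λ⟩^{1/2}` and that of `𝓡 √K` of size `⟨λ⟩^{-1/2}`, so Plancherel handles the `L^2` norms.

The `L^r → L^∞` bound is a Bernstein inequality: Hölder against the convolution kernel reduces it
to the `L^s` norm of the inverse Fourier transform of the localized symbol, `1/s = 2/(qd) + 1/2`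
being dual to `1/r`. As `q > 2`, the function `(1 + λ₁|y|)⁻¹` lies in `L^{qd/2}`, so that norm is
controlled by the `L^2` norm against the weight `1 + λ₁|y|`, that is, by Plancherel for the symbol
and its gradient. The resulting factor is `λ₁^{d/2 - 2/q}`.

Hölder in time then produces `T^{1 - 1/q}`, bounding the `L^q_T L^r_x` norm by the `X_{λ₁}` norm
costs `⟨λ₁⟩^{3/(2q)}`, and `λ₁^{d/2 - 2/q} ⟨λ₁⟩^{3/(2q)} ≤ ⟨λ₁⟩^{d/2 - 1/(2q)}`.
-/

section Fourier

variable {V F : Type*} [NormedAddCommGroup V] [InnerProductSpace ℝ V] [MeasurableSpace V]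
  [BorelSpace V] [FiniteDimensional ℝ V]

section NormedSpace

variable [NormedAddCommGroup F] [NormedSpace ℂ F]

theorem fourier_eq_zero_of_not_integrable {f : V → F} (hf : ¬ Integrable f) : 𝓕 f = 0 := by
  ext w
  rw [Real.fourier_eq]
  exact integral_undef fun h => hf ((Real.fourierIntegral_convergent_iff w).1 h)

theorem continuous_fourier (f : V → F) : Continuous (𝓕 f) := by
  by_cases hf : Integrable f
  · exact VectorFourier.fourierIntegral_continuous (L := innerₗ V)
      Real.continuous_fourierChar continuous_inner hf
  · rw [fourier_eq_zero_of_not_integrable hf]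
    exact continuous_zero

theorem fourierInv_eq_comp_neg (f : V → F) : 𝓕⁻ f = 𝓕 f ∘ Neg.neg :=
  funext (Real.fourierInv_eq_fourier_neg f)

theorem continuous_fourierInv (f : V → F) : Continuous (𝓕⁻ f) := by
  rw [fourierInv_eq_comp_neg]
  exact (continuous_fourier f).comp continuous_neg

theorem integral_fourier_smul_eq_integral_smul_fourier [CompleteSpace F] {f : V → ℂ} {g : V → F}
    (hf : Integrable f) (hg : Integrable g) : ∫ ξ, 𝓕 f ξ • g ξ = ∫ x, f x • 𝓕 g x := by
  simpa using! VectorFourier.integral_fourierIntegral_smul_eq_flip (L := innerₗ V)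
    (μ := volume) (ν := volume) Real.continuous_fourierChar continuous_inner hf hg

end NormedSpace

section Plancherel

variable [NormedAddCommGroup F] [InnerProductSpace ℂ F] [CompleteSpace F]

theorem fourier_ae_eq_Lp_fourier {f : V → F} (hf : Integrable f) (hf₂ : MemLp f 2) :
    𝓕 f =ᵐ[volume] (𝓕 (hf₂.toLp f) : Lp F 2) := by
  refine ae_eq_of_integral_contDiff_smul_eq (continuous_fourier f).locallyIntegrable
    ((Lp.memLp _).locallyIntegrable (by norm_num)) fun g hg hg_supp => ?_
  have hg_supp' : HasCompactSupport fun x => (g x : ℂ) :=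
    hg_supp.comp_left (g := ((↑) : ℝ → ℂ)) rfl
  let φ : SchwartzMap V ℂ := hg_supp'.toSchwartzMap (Complex.ofRealCLM.contDiff.comp hg)
  have hφ (x : V) : φ x = g x := rfl
  have h_distrib := congrArg (· φ) (Lp.fourier_toTemperedDistribution_eq (hf₂.toLp f))
  simp only [TemperedDistribution.fourier_apply, Lp.toTemperedDistribution_apply] at h_distrib
  calc ∫ x, g x • 𝓕 f x = ∫ x, φ x • 𝓕 f x := by simp only [hφ, Complex.coe_smul]
    _ = ∫ x, 𝓕 (φ : V → ℂ) x • f x :=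
      (integral_fourier_smul_eq_integral_smul_fourier φ.integrable hf).symm
    _ = ∫ x, 𝓕 φ x • hf₂.toLp f x := by
      refine integral_congr_ae ?_
      filter_upwards [hf₂.coeFn_toLp] with x hx
      rw [hx, SchwartzMap.fourier_coe]
    _ = ∫ x, φ x • (𝓕 (hf₂.toLp f) : Lp F 2 (volume : Measure V)) x := h_distrib
    _ = ∫ x, g x • (𝓕 (hf₂.toLp f) : Lp F 2 (volume : Measure V)) x := by
      simp only [hφ, Complex.coe_smul]

theorem eLpNorm_fourier_le (f : V → F) : eLpNorm (𝓕 f) 2 ≤ eLpNorm f 2 := by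
  by_cases hf : Integrable f
  · by_cases hf₂ : eLpNorm f 2 = ⊤
    · simp [hf₂]
    have hm : MemLp f 2 := ⟨hf.aestronglyMeasurable, lt_top_iff_ne_top.2 hf₂⟩
    have h_norm := Lp.norm_fourier_eq (hm.toLp f)
    rw [Lp.norm_def, Lp.norm_def, ENNReal.toReal_eq_toReal_iff' (Lp.eLpNorm_ne_top _)
      (Lp.eLpNorm_ne_top _)] at h_norm
    rw [eLpNorm_congr_ae (fourier_ae_eq_Lp_fourier hf hm), h_norm, eLpNorm_congr_ae hm.coeFn_toLp]
  · simp [fourier_eq_zero_of_not_integrable hf]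

theorem eLpNorm_fourierInv_le (f : V → F) : eLpNorm (𝓕⁻ f) 2 ≤ eLpNorm f 2 := by
  rw [fourierInv_eq_comp_neg, eLpNorm_comp_measurePreserving
    (continuous_fourier f).aestronglyMeasurable (Measure.measurePreserving_neg volume)]
  exact eLpNorm_fourier_le f

end Plancherel

end Fourier

section Multiplier

variable {d : ℕ} {m m' f : Euc d → ℂ}

theorem continuous_mulOp (m f : Euc d → ℂ) : Continuous (mulOp m f) :=
  continuous_fourierInv _

theorem mulOp_congr (h : ∀ ξ, 𝓕 f ξ ≠ 0 → m ξ = m' ξ) : mulOp m f = mulOp m' f := by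
  unfold mulOp
  congr 1
  ext ξ
  by_cases hξ : 𝓕 f ξ = 0
  · simp [hξ]
  · rw [h ξ hξ]

theorem mulOp_eq_zero_of_not_integrable (hf : ¬ Integrable f) : mulOp m f = 0 := by
  ext x
  simp [mulOp, fourier_eq_zero_of_not_integrable hf, Real.fourierInv_eq]

theorem eLpNorm_mulOp_le {A : ℝ} (hm : ∀ ξ, ‖m ξ‖ ≤ A) :
    eLpNorm (mulOp m f) 2 ≤ ENNReal.ofReal A * eLpNorm f 2 := by
  have h_symbol : ∀ᵐ ξ, ‖m ξ * 𝓕 f ξ‖ ≤ A * ‖𝓕 f ξ‖ := .of_forall fun ξ => by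
    rw [norm_mul]
    gcongr
    exact hm ξ
  calc eLpNorm (mulOp m f) 2 volume
    _ ≤ eLpNorm (fun ξ => m ξ * 𝓕 f ξ) 2 volume := eLpNorm_fourierInv_le _
    _ ≤ ENNReal.ofReal A * eLpNorm (𝓕 f) 2 volume :=
      eLpNorm_le_mul_eLpNorm_of_ae_le_mul h_symbol 2
    _ ≤ ENNReal.ofReal A * eLpNorm f 2 volume := by
      gcongr
      exact eLpNorm_fourier_le f

theorem fourier_mulOp (hm : Continuous m) (hm_supp : HasCompactSupport m)
    (hf : Integrable (mulOp m f)) : 𝓕 (mulOp m f) = fun ξ => m ξ * 𝓕 f ξ := by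
  set g : Euc d → ℂ := fun ξ => m ξ * 𝓕 f ξ
  have hg : Continuous g := hm.mul (continuous_fourier f)
  have h_fourier : Integrable (𝓕 g) := by
    simpa [mulOp, g, fourierInv_eq_comp_neg, Function.comp_def] using! hf.comp_neg
  exact hg.fourier_fourierInv_eq (hg.integrable_of_hasCompactSupport hm_supp.mul_right) h_fourier

theorem symbol_ne_zero_of_fourier_mulOp_ne_zero (hm : Continuous m) (hm_supp : HasCompactSupport m)
    {ξ : Euc d} (hξ : 𝓕 (mulOp m f) ξ ≠ 0) : m ξ ≠ 0 := by
  by_cases hf : Integrable (mulOp m f)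
  · rw [fourier_mulOp hm hm_supp hf] at hξ
    exact left_ne_zero_of_mul hξ
  · simp [fourier_eq_zero_of_not_integrable hf] at hξ

end Multiplier

section WeightedPlancherel

variable {V W F : Type*} [NormedAddCommGroup V] [InnerProductSpace ℝ V]

theorem opNorm_le_sum [NormedAddCommGroup F] [NormedSpace ℝ F] {ι : Type*}
    [Fintype ι] (b : OrthonormalBasis ι ℝ V) (A : V →L[ℝ] F) : ‖A‖ ≤ ∑ i, ‖A (b i)‖ := by
  refine A.opNorm_le_bound (by positivity) fun x => ?_
  calc ‖A x‖ = ‖∑ i, inner ℝ (b i) x • A (b i)‖ := by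
        conv_lhs => rw [← b.sum_repr' x, map_sum]
        simp only [map_smul]
    _ ≤ ∑ i, ‖inner ℝ (b i) x • A (b i)‖ := norm_sum_le _ _
    _ ≤ ∑ i, ‖A (b i)‖ * ‖x‖ := by
      gcongr with i
      rw [norm_smul, mul_comm]
      gcongr
      simpa using norm_inner_le_norm (𝕜 := ℝ) (b i) x
    _ = (∑ i, ‖A (b i)‖) * ‖x‖ := by rw [Finset.sum_mul]

variable [MeasurableSpace V] [BorelSpace V] [FiniteDimensional ℝ V]
  [NormedAddCommGroup W] [InnerProductSpace ℝ W] [FiniteDimensional ℝ W]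
  [NormedAddCommGroup F] [InnerProductSpace ℂ F] [CompleteSpace F]

-- The operator norm is not Hilbertian, so Plancherel is applied in coordinates.
theorem eLpNorm_fourier_continuousLinearMap_le {A : V → W →L[ℝ] F} (hA : Integrable A) :
    eLpNorm (𝓕 A) 2 ≤ Module.finrank ℝ W * eLpNorm A 2 := by
  let b := stdOrthonormalBasis ℝ W
  have h_coord (i) : eLpNorm (𝓕 fun x => A x (b i)) 2 ≤ eLpNorm A 2 :=
    (eLpNorm_fourier_le _).trans <| eLpNorm_mono fun x => by
      simpa using (A x).le_opNorm (b i)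
  calc eLpNorm (𝓕 A) 2 volume
    _ ≤ eLpNorm (∑ i, fun y => ‖𝓕 (fun x => A x (b i)) y‖) 2 volume :=
      eLpNorm_mono_real fun y => by
        simpa [Real.fourier_continuousLinearMap_apply hA] using opNorm_le_sum b (𝓕 A y)
    _ ≤ ∑ i, eLpNorm (fun y => ‖𝓕 (fun x => A x (b i)) y‖) 2 volume :=
      eLpNorm_sum_le (fun i _ => (continuous_fourier _).norm.aestronglyMeasurable) one_le_two
    _ ≤ ∑ _i : Fin (Module.finrank ℝ W), eLpNorm A 2 volume := by
      gcongr with i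
      rw [eLpNorm_norm]
      exact h_coord i
    _ = Module.finrank ℝ W * eLpNorm A 2 volume := by simp

variable {σ : V → F}

theorem eLpNorm_norm_mul_norm_fourier_le (hσ : Integrable σ) (hσ_diff : Differentiable ℝ σ)
    (hσ' : Integrable (fderiv ℝ σ)) :
    eLpNorm (fun y => ‖y‖ * ‖𝓕 σ y‖) 2 ≤ Module.finrank ℝ V * eLpNorm (fderiv ℝ σ) 2 := by
  refine (eLpNorm_mono fun y => ?_).trans (eLpNorm_fourier_continuousLinearMap_le hσ')
  have h_two_pi : 1 ≤ 2 * π := by linarith [Real.pi_gt_three]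
  rw [Real.fourier_fderiv hσ hσ_diff hσ', VectorFourier.norm_fourierSMulRight,
    neg_apply, norm_neg, innerSL_apply_norm]
  simpa [mul_assoc] using le_mul_of_one_le_left (b := ‖y‖ * ‖𝓕 σ y‖) (by positivity) h_two_pi

theorem eLpNorm_one_add_mul_norm_mul_norm_fourier_le {lam : ℝ} (hlam : 0 ≤ lam)
    (hσ : Integrable σ) (hσ_diff : Differentiable ℝ σ) (hσ' : Integrable (fderiv ℝ σ)) :
    eLpNorm (fun y => (1 + lam * ‖y‖) * ‖𝓕 σ y‖) 2 ≤
      eLpNorm σ 2 + Module.finrank ℝ V * (ENNReal.ofReal lam * eLpNorm (fderiv ℝ σ) 2) := by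
  have h_cont : Continuous fun y => ‖𝓕 σ y‖ := (continuous_fourier σ).norm
  have h_split : (fun y => (1 + lam * ‖y‖) * ‖𝓕 σ y‖) =
      (fun y => ‖𝓕 σ y‖) + lam • fun y => ‖y‖ * ‖𝓕 σ y‖ := by
    ext y
    simp only [Pi.add_apply, Pi.smul_apply, smul_eq_mul]
    ring
  rw [h_split]
  refine (eLpNorm_add_le h_cont.aestronglyMeasurable
    ((continuous_norm.mul h_cont).const_smul lam).aestronglyMeasurable one_le_two).trans ?_
  rw [eLpNorm_norm, eLpNorm_const_smul, Real.enorm_of_nonneg hlam, mul_left_comm]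
  gcongr
  · exact eLpNorm_fourier_le σ
  · exact eLpNorm_norm_mul_norm_fourier_le hσ hσ_diff hσ'

end WeightedPlancherel

section Weight

variable {V F : Type*} [NormedAddCommGroup V] [NormedSpace ℝ V] [FiniteDimensional ℝ V]
  [MeasurableSpace V] [BorelSpace V] (μ : Measure V) [μ.IsAddHaarMeasure]

theorem eLpNorm_inv_one_add_norm_ne_top {p : ℝ} (hp : Module.finrank ℝ V < p) :
    eLpNorm (fun y : V => (1 + ‖y‖)⁻¹) (ENNReal.ofReal p) μ ≠ ⊤ := by
  have hp₀ : 0 < p := (Nat.cast_nonneg _).trans_lt hp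
  rw [eLpNorm_eq_lintegral_rpow_enorm_toReal (by simpa using hp₀) ENNReal.ofReal_ne_top,
    ENNReal.toReal_ofReal hp₀.le]
  refine ENNReal.rpow_ne_top_of_nonneg (by positivity)
    (ne_of_eq_of_ne (lintegral_congr fun y => ?_) (finite_integral_one_add_norm (μ := μ) hp).ne)
  have hy : 0 < 1 + ‖y‖ := by positivity
  rw [Real.enorm_of_nonneg (by positivity), ENNReal.ofReal_rpow_of_pos (by positivity),
    Real.inv_rpow hy.le, Real.rpow_neg hy.le]

theorem eLpNorm_inv_one_add_mul_norm {p lam : ℝ} (hp : 0 < p) (hlam : 0 < lam) :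
    eLpNorm (fun y : V => (1 + lam * ‖y‖)⁻¹) (ENNReal.ofReal p) μ =
      ENNReal.ofReal (lam ^ (-(Module.finrank ℝ V / p))) *
        eLpNorm (fun y : V => (1 + ‖y‖)⁻¹) (ENNReal.ofReal p) μ := by
  have h_comp : (fun y : V => (1 + lam * ‖y‖)⁻¹) = (fun y => (1 + ‖y‖)⁻¹) ∘ (lam • ·) := by
    ext y
    simp [norm_smul, abs_of_pos hlam]
  have h_meas : Measurable fun y : V => (1 + ‖y‖)⁻¹ := by fun_prop
  rw [h_comp, ← eLpNorm_map_measure h_meas.aestronglyMeasurable (by fun_prop),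
    Measure.map_addHaar_smul _ hlam.ne', eLpNorm_smul_measure_of_ne_top ENNReal.ofReal_ne_top,
    ENNReal.toReal_div, ENNReal.toReal_one, ENNReal.toReal_ofReal hp.le, smul_eq_mul,
    abs_of_pos (by positivity), ENNReal.ofReal_rpow_of_pos (by positivity), ← Real.rpow_natCast,
    ← Real.rpow_neg hlam.le, ← Real.rpow_mul hlam.le]
  congr 3
  ring

end Weight

section Lp

variable {α F : Type*} [MeasurableSpace α] {μ : Measure α} [NormedAddCommGroup F] {f : α → F}
  {p : ℝ≥0∞} {s : Set α} {C : ℝ}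

theorem eLpNorm_le_of_bound_of_support_subset (hC : ∀ x, ‖f x‖ ≤ C)
    (hs : Function.support f ⊆ s) : eLpNorm f p μ ≤ μ s ^ p.toReal⁻¹ * ENNReal.ofReal C := by
  rw [← eLpNorm_restrict_eq_of_support_subset hs, ← Measure.restrict_apply_univ s]
  exact eLpNorm_le_of_ae_bound (.of_forall hC)

theorem integrable_of_bound_of_support_subset (hf : AEStronglyMeasurable f μ)
    (hC : ∀ x, ‖f x‖ ≤ C) (hs : Function.support f ⊆ s) (hμs : μ s ≠ ⊤) : Integrable f μ := by
  refine memLp_one_iff_integrable.1 ⟨hf, (eLpNorm_le_of_bound_of_support_subset hC hs).trans_lt ?_⟩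
  simpa using ENNReal.mul_lt_top hμs.lt_top ENNReal.ofReal_lt_top

theorem eLpNorm_le_eLpNorm_inv_weight_mul {w : α → ℝ} (hw : Measurable w) (hw₀ : ∀ x, 0 < w x)
    (hf : AEStronglyMeasurable f μ) (p q r : ℝ≥0∞) [p.HolderTriple q r] :
    eLpNorm f r μ ≤ eLpNorm (fun x => (w x)⁻¹) p μ * eLpNorm (fun x => w x * ‖f x‖) q μ := by
  have h_eq : (fun x => ‖f x‖) = (fun x => (w x)⁻¹) • fun x => w x * ‖f x‖ := by
    ext x
    simp [(hw₀ x).ne']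
  rw [← eLpNorm_norm f, h_eq]
  exact eLpNorm_smul_le_mul_eLpNorm (hw.aestronglyMeasurable.mul hf.norm)
    hw.inv.aestronglyMeasurable

end Lp

section Bernstein

variable {d : ℕ} {σ f : Euc d → ℂ}

theorem mulOp_eq_integral_translate (hσ : Integrable σ) (hf : Integrable f) (x : Euc d) :
    mulOp σ f x = ∫ y, f (y + x) * 𝓕 σ y := by
  have h_translate : 𝓕 (fun y => f (y + x)) = fun ξ => Real.fourierChar (inner ℝ x ξ) • 𝓕 f ξ :=
    VectorFourier.fourierIntegral_comp_add_right Real.fourierChar volume (innerₗ (Euc d)) f x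
  calc mulOp σ f x = ∫ ξ, 𝓕 (fun y => f (y + x)) ξ • σ ξ := by
        simp only [mulOp, Real.fourierInv_eq, h_translate]
        congr 1 with ξ
        rw [real_inner_comm, smul_assoc, smul_eq_mul, mul_comm]
    _ = ∫ y, f (y + x) • 𝓕 σ y :=
      integral_fourier_smul_eq_integral_smul_fourier (hf.comp_add_right x) hσ

theorem eLpNorm_top_mulOp_le (hσ : Integrable σ) (r s : ℝ≥0∞) [r.HolderConjugate s] :
    eLpNorm (mulOp σ f) ∞ ≤ eLpNorm f r * eLpNorm (𝓕 σ) s := by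
  by_cases hf : Integrable f
  swap
  · simp [mulOp_eq_zero_of_not_integrable hf]
  rw [eLpNorm_exponent_top]
  refine eLpNormEssSup_le_of_ae_enorm_bound (.of_forall fun x => ?_)
  have h_shift := measurePreserving_add_right (volume : Measure (Euc d)) x
  calc ‖mulOp σ f x‖ₑ ≤ ∫⁻ y, ‖f (y + x) * 𝓕 σ y‖ₑ := by
        rw [mulOp_eq_integral_translate hσ hf x]
        exact enorm_integral_le_lintegral_enorm _
    _ = eLpNorm ((f ∘ (· + x)) • 𝓕 σ) 1 volume := eLpNorm_one_eq_lintegral_enorm.symm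
    _ ≤ eLpNorm (f ∘ (· + x)) r volume * eLpNorm (𝓕 σ) s volume :=
      eLpNorm_smul_le_mul_eLpNorm (continuous_fourier σ).aestronglyMeasurable
        (hf.aestronglyMeasurable.comp_measurePreserving h_shift)
    _ = eLpNorm f r volume * eLpNorm (𝓕 σ) s volume := by
      rw [eLpNorm_comp_measurePreserving hf.aestronglyMeasurable h_shift]

/-- Symbols localized to frequencies `|ξ| ≤ 4 lam` that behave there like a rescaled bump
`A • φ(ξ / lam)`, as far as one derivative can tell. -/
structure IsBumpSymbol (σ : Euc d → ℂ) (lam A : ℝ) : Prop where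
  differentiable : Differentiable ℝ σ
  norm_le (ξ : Euc d) : ‖σ ξ‖ ≤ A
  mul_norm_fderiv_le (ξ : Euc d) : lam * ‖fderiv ℝ σ ξ‖ ≤ A
  support_subset : Function.support σ ⊆ Metric.closedBall 0 (4 * lam)

namespace IsBumpSymbol

variable {lam A : ℝ}

theorem support_fderiv_subset (h : IsBumpSymbol σ lam A) :
    Function.support (fderiv ℝ σ) ⊆ Metric.closedBall 0 (4 * lam) :=
  (_root_.support_fderiv_subset ℝ).trans
    (closure_minimal h.support_subset Metric.isClosed_closedBall)

theorem norm_smul_fderiv_le (h : IsBumpSymbol σ lam A) (hlam : 0 ≤ lam) (ξ : Euc d) :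
    ‖(lam • fderiv ℝ σ) ξ‖ ≤ A := by
  rw [Pi.smul_apply, norm_smul, Real.norm_of_nonneg hlam]
  exact h.mul_norm_fderiv_le ξ

theorem integrable (h : IsBumpSymbol σ lam A) : Integrable σ :=
  integrable_of_bound_of_support_subset h.differentiable.continuous.aestronglyMeasurable
    h.norm_le h.support_subset measure_closedBall_lt_top.ne

theorem integrable_fderiv (h : IsBumpSymbol σ lam A) (hlam : 0 < lam) :
    Integrable (fderiv ℝ σ) := by
  refine integrable_of_bound_of_support_subset (C := A / lam)
    (measurable_fderiv ℝ σ).aestronglyMeasurable (fun ξ => ?_) h.support_fderiv_subset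
    measure_closedBall_lt_top.ne
  rw [le_div_iff₀' hlam]
  exact h.mul_norm_fderiv_le ξ

theorem eLpNorm_weight_mul_fourier_le (h : IsBumpSymbol σ lam A) (hlam : 0 < lam) :
    eLpNorm (fun y => (1 + lam * ‖y‖) * ‖𝓕 σ y‖) 2 ≤
      (1 + d) * volume (Metric.closedBall (0 : Euc d) 4) ^ (2⁻¹ : ℝ) *
        ENNReal.ofReal (A * lam ^ ((d : ℝ) / 2)) := by
  set V := volume (Metric.closedBall (0 : Euc d) (4 * lam)) ^ (2⁻¹ : ℝ)
  have hV : V = ENNReal.ofReal (lam ^ ((d : ℝ) / 2)) *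
      volume (Metric.closedBall (0 : Euc d) 4) ^ (2⁻¹ : ℝ) := by
    simp only [V, mul_comm 4 lam]
    rw [Measure.addHaar_closedBall_mul_of_pos _ _ hlam,
      ENNReal.mul_rpow_of_nonneg _ _ (by norm_num), ENNReal.ofReal_rpow_of_pos (by positivity),
      finrank_euclideanSpace_fin, ← Real.rpow_natCast, ← Real.rpow_mul hlam.le, div_eq_mul_inv]
  have h_symbol : eLpNorm σ 2 ≤ V * ENNReal.ofReal A := by
    simpa using eLpNorm_le_of_bound_of_support_subset (p := 2) h.norm_le h.support_subset
  have h_fderiv : ENNReal.ofReal lam * eLpNorm (fderiv ℝ σ) 2 ≤ V * ENNReal.ofReal A := by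
    rw [← Real.enorm_of_nonneg hlam.le, ← eLpNorm_const_smul]
    simpa using eLpNorm_le_of_bound_of_support_subset (p := 2) (h.norm_smul_fderiv_le hlam.le)
      ((Function.support_const_smul_subset lam _).trans h.support_fderiv_subset)
  calc eLpNorm (fun y => (1 + lam * ‖y‖) * ‖𝓕 σ y‖) 2 volume
    _ ≤ eLpNorm σ 2 volume +
        Module.finrank ℝ (Euc d) * (ENNReal.ofReal lam * eLpNorm (fderiv ℝ σ) 2 volume) :=
      eLpNorm_one_add_mul_norm_mul_norm_fourier_le hlam.le h.integrable h.differentiable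
        (h.integrable_fderiv hlam)
    _ ≤ V * ENNReal.ofReal A + d * (V * ENNReal.ofReal A) := by
      rw [finrank_euclideanSpace_fin]
      gcongr
    _ = (1 + d) * volume (Metric.closedBall (0 : Euc d) 4) ^ (2⁻¹ : ℝ) *
        ENNReal.ofReal (A * lam ^ ((d : ℝ) / 2)) := by
      rw [hV, ENNReal.ofReal_mul ((norm_nonneg _).trans (h.norm_le 0))]
      ring

end IsBumpSymbol

theorem exists_eLpNorm_fourier_le_of_isBumpSymbol {p : ℝ} (hp : d < p) (s : ℝ≥0∞)
    [(ENNReal.ofReal p).HolderTriple 2 s] :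
    ∃ C : ℝ, 0 ≤ C ∧ ∀ (σ : Euc d → ℂ) (lam A : ℝ), 0 < lam → IsBumpSymbol σ lam A →
      eLpNorm (𝓕 σ) s ≤ ENNReal.ofReal (C * A * lam ^ ((d : ℝ) / 2 - d / p)) := by
  have hp₀ : 0 < p := (Nat.cast_nonneg d).trans_lt hp
  set W := eLpNorm (fun y : Euc d => (1 + ‖y‖)⁻¹) (ENNReal.ofReal p)
  set B := (1 + d) * volume (Metric.closedBall (0 : Euc d) 4) ^ (2⁻¹ : ℝ)
  have hW : W ≠ ∞ := eLpNorm_inv_one_add_norm_ne_top volume (by simpa using hp)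
  have hB : B ≠ ∞ := ENNReal.mul_ne_top (by simp)
    (ENNReal.rpow_ne_top_of_nonneg (by norm_num) measure_closedBall_lt_top.ne)
  refine ⟨(W * B).toReal, ENNReal.toReal_nonneg, fun σ lam A hlam hσ => ?_⟩
  calc eLpNorm (𝓕 σ) s volume
    _ ≤ eLpNorm (fun y : Euc d => (1 + lam * ‖y‖)⁻¹) (ENNReal.ofReal p) volume *
        eLpNorm (fun y => (1 + lam * ‖y‖) * ‖𝓕 σ y‖) 2 volume :=
      eLpNorm_le_eLpNorm_inv_weight_mul (by fun_prop) (fun y => by positivity)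
        (continuous_fourier σ).aestronglyMeasurable _ _ _
    _ ≤ (ENNReal.ofReal (lam ^ (-(d / p))) * W) *
        (B * ENNReal.ofReal (A * lam ^ ((d : ℝ) / 2))) := by
      rw [eLpNorm_inv_one_add_mul_norm volume hp₀ hlam, finrank_euclideanSpace_fin]
      gcongr
      exact hσ.eLpNorm_weight_mul_fourier_le hlam
    _ = (W * B) * ENNReal.ofReal (A * lam ^ ((d : ℝ) / 2 - d / p)) := by
      rw [sub_eq_neg_add, Real.rpow_add hlam, mul_left_comm A,
        ENNReal.ofReal_mul (p := lam ^ _) (by positivity)]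
      ring
    _ = ENNReal.ofReal ((W * B).toReal * A * lam ^ ((d : ℝ) / 2 - d / p)) := by
      rw [mul_assoc (W * B).toReal, ENNReal.ofReal_mul (p := (W * B).toReal) (by positivity),
        ENNReal.ofReal_toReal (ENNReal.mul_ne_top hW hB)]

theorem exists_eLpNorm_top_mulOp_le_of_isBumpSymbol {p : ℝ} (hp : d < p) (r s : ℝ≥0∞)
    [(ENNReal.ofReal p).HolderTriple 2 s] [r.HolderConjugate s] :
    ∃ C : ℝ, 0 ≤ C ∧ ∀ (σ f : Euc d → ℂ) (lam A : ℝ), 0 < lam → IsBumpSymbol σ lam A →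
      eLpNorm (mulOp σ f) ∞ ≤
        ENNReal.ofReal (C * A * lam ^ ((d : ℝ) / 2 - d / p)) * eLpNorm f r := by
  obtain ⟨C, hC, h_kernel⟩ := exists_eLpNorm_fourier_le_of_isBumpSymbol hp s
  refine ⟨C, hC, fun σ f lam A hlam hσ => (eLpNorm_top_mulOp_le hσ.integrable r s).trans ?_⟩
  rw [mul_comm]
  gcongr
  exact h_kernel σ lam A hlam hσ

end Bernstein

section Mikhlin

variable {V : Type*} [NormedAddCommGroup V] [NormedSpace ℝ V] {m m' : V → ℝ} {A B : ℝ} {ξ : V}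

/-- The order-one Mikhlin condition with constant `A` at the frequency `ξ`: both `|m|` and
`|ξ| |∇m|` are at most `A`. Being pointwise, it applies with `A` depending on `ξ`. -/
structure IsMikhlinAt (m : V → ℝ) (A : ℝ) (ξ : V) : Prop where
  differentiableAt : DifferentiableAt ℝ m ξ
  abs_le : |m ξ| ≤ A
  norm_mul_norm_fderiv_le : ‖ξ‖ * ‖fderiv ℝ m ξ‖ ≤ A

namespace IsMikhlinAt

theorem mono (h : IsMikhlinAt m A ξ) (hAB : A ≤ B) : IsMikhlinAt m B ξ :=
  ⟨h.differentiableAt, h.abs_le.trans hAB, h.norm_mul_norm_fderiv_le.trans hAB⟩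

theorem nonneg (h : IsMikhlinAt m A ξ) : 0 ≤ A :=
  (abs_nonneg _).trans h.abs_le

theorem sub (h : IsMikhlinAt m A ξ) (h' : IsMikhlinAt m' B ξ) :
    IsMikhlinAt (fun ξ => m ξ - m' ξ) (A + B) ξ where
  differentiableAt := h.differentiableAt.sub h'.differentiableAt
  abs_le := (abs_sub _ _).trans (add_le_add h.abs_le h'.abs_le)
  norm_mul_norm_fderiv_le := by
    rw [fderiv_fun_sub h.differentiableAt h'.differentiableAt]
    calc ‖ξ‖ * ‖fderiv ℝ m ξ - fderiv ℝ m' ξ‖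
      _ ≤ ‖ξ‖ * (‖fderiv ℝ m ξ‖ + ‖fderiv ℝ m' ξ‖) := by gcongr; exact norm_sub_le _ _
      _ ≤ A + B := by
        rw [mul_add]
        exact add_le_add h.norm_mul_norm_fderiv_le h'.norm_mul_norm_fderiv_le

theorem mul (h : IsMikhlinAt m A ξ) (h' : IsMikhlinAt m' B ξ) :
    IsMikhlinAt (fun ξ => m ξ * m' ξ) (2 * (A * B)) ξ where
  differentiableAt := h.differentiableAt.mul h'.differentiableAt
  abs_le := by
    have h_prod : |m ξ| * |m' ξ| ≤ A * B :=
      mul_le_mul h.abs_le h'.abs_le (abs_nonneg _) h.nonneg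
    rw [abs_mul]
    linarith [mul_nonneg h.nonneg h'.nonneg]
  norm_mul_norm_fderiv_le := by
    rw [fderiv_fun_mul h.differentiableAt h'.differentiableAt]
    calc ‖ξ‖ * ‖m ξ • fderiv ℝ m' ξ + m' ξ • fderiv ℝ m ξ‖
      _ ≤ ‖ξ‖ * (‖m ξ • fderiv ℝ m' ξ‖ + ‖m' ξ • fderiv ℝ m ξ‖) := by
        gcongr; exact norm_add_le _ _
      _ = |m ξ| * (‖ξ‖ * ‖fderiv ℝ m' ξ‖) + |m' ξ| * (‖ξ‖ * ‖fderiv ℝ m ξ‖) := by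
        rw [norm_smul, norm_smul, Real.norm_eq_abs, Real.norm_eq_abs]
        ring
      _ ≤ A * B + B * A := by
        gcongr
        exacts [h.nonneg, h.abs_le, h'.norm_mul_norm_fderiv_le, h'.nonneg, h'.abs_le,
          h.norm_mul_norm_fderiv_le]
      _ = 2 * (A * B) := by ring

theorem sqrt (h : IsMikhlinAt m (2 * m ξ) ξ) (hm : 0 < m ξ) :
    IsMikhlinAt (fun ξ => √(m ξ)) √(m ξ) ξ where
  differentiableAt := h.differentiableAt.sqrt hm.ne'
  abs_le := (abs_of_nonneg (Real.sqrt_nonneg _)).le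
  norm_mul_norm_fderiv_le := by
    rw [fderiv_sqrt h.differentiableAt hm.ne', norm_smul, Real.norm_of_nonneg (by positivity),
      mul_left_comm, one_div, inv_mul_le_iff₀ (by positivity), mul_assoc,
      Real.mul_self_sqrt hm.le]
    exact h.norm_mul_norm_fderiv_le

theorem comp_smul {c : ℝ} (h : IsMikhlinAt m A (c • ξ)) : IsMikhlinAt (fun ξ => m (c • ξ)) A ξ where
  differentiableAt := h.differentiableAt.comp ξ (by fun_prop)
  abs_le := h.abs_le
  norm_mul_norm_fderiv_le := by
    have h_fderiv := h.norm_mul_norm_fderiv_le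
    rwa [fderiv_comp_smul, norm_smul, ← mul_assoc, mul_comm ‖ξ‖, ← norm_smul]

end IsMikhlinAt

theorem exists_isMikhlinAt_of_hasCompactSupport (hm : ContDiff ℝ 1 m)
    (hm_supp : HasCompactSupport m) : ∃ A, ∀ ξ, IsMikhlinAt m A ξ := by
  obtain ⟨A, hA⟩ := hm_supp.exists_bound_of_continuous hm.continuous
  obtain ⟨B, hB⟩ := (hm_supp.fderiv ℝ).norm.mul_left (f := fun ξ : V => ‖ξ‖)
    |>.exists_bound_of_continuous
      (continuous_norm.mul (hm.continuous_fderiv one_ne_zero).norm)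
  refine ⟨max A B, fun ξ => ⟨hm.differentiable one_ne_zero ξ, (hA ξ).trans (le_max_left _ _),
    (le_abs_self _).trans ((hB ξ).trans (le_max_right _ _))⟩⟩

theorem isMikhlinAt_continuousLinearMap {L : V →L[ℝ] ℝ} (hL : ‖L‖ ≤ 1) (ξ : V) :
    IsMikhlinAt L ‖ξ‖ ξ where
  differentiableAt := L.differentiableAt
  abs_le := (L.le_opNorm ξ).trans (mul_le_of_le_one_left (norm_nonneg _) hL)
  norm_mul_norm_fderiv_le := by
    rw [L.fderiv]
    exact mul_le_of_le_one_right (norm_nonneg _) hL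

theorem isMikhlinAt_of_hasDerivAt {g : ℝ → ℝ} {g' s : ℝ} (hg : HasDerivAt g g' s)
    (h_abs : |g s| ≤ A) (h_deriv : |s * g'| ≤ A) : IsMikhlinAt g A s where
  differentiableAt := hg.differentiableAt
  abs_le := h_abs
  norm_mul_norm_fderiv_le := by
    rwa [← norm_deriv_eq_norm_fderiv, hg.deriv, ← norm_mul, Real.norm_eq_abs]

theorem isMikhlinAt_inv {s : ℝ} (hs : 0 < s) : IsMikhlinAt (fun s : ℝ => s⁻¹) s⁻¹ s := by
  refine isMikhlinAt_of_hasDerivAt (hasDerivAt_inv hs.ne') (abs_of_pos (inv_pos.2 hs)).le ?_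
  rw [mul_neg, abs_neg, pow_two, mul_inv, mul_inv_cancel_left₀ hs.ne', abs_of_pos (inv_pos.2 hs)]

theorem IsMikhlinAt.comp_norm {E : Type*} [NormedAddCommGroup E] [InnerProductSpace ℝ E]
    {g : ℝ → ℝ} {ξ : E} (hξ : ξ ≠ 0) (h : IsMikhlinAt g A ‖ξ‖) :
    IsMikhlinAt (fun ξ => g ‖ξ‖) A ξ := by
  have h_norm : DifferentiableAt ℝ (fun η : E => ‖η‖) ξ := differentiableAt_id.norm ℝ hξ
  refine ⟨h.differentiableAt.comp ξ h_norm, h.abs_le, ?_⟩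
  calc ‖ξ‖ * ‖fderiv ℝ (g ∘ fun η => ‖η‖) ξ‖
    _ ≤ ‖ξ‖ * (‖fderiv ℝ g ‖ξ‖‖ * ‖fderiv ℝ (fun η : E => ‖η‖) ξ‖) := by
      rw [fderiv_comp ξ h.differentiableAt h_norm]
      gcongr
      exact ContinuousLinearMap.opNorm_comp_le _ _
    _ ≤ ‖ξ‖ * ‖fderiv ℝ g ‖ξ‖‖ := by
      gcongr
      refine mul_le_of_le_one_right (norm_nonneg _) ?_
      simpa using norm_fderiv_le_of_lipschitz ℝ (lipschitzWith_one_norm (E := E))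
    _ ≤ A := by simpa using h.norm_mul_norm_fderiv_le

end Mikhlin

section Tanh

theorem hasDerivAt_tanh (s : ℝ) : HasDerivAt Real.tanh (Real.cosh s ^ 2)⁻¹ s := by
  have h := (Real.hasDerivAt_sinh s).div (Real.hasDerivAt_cosh s) (Real.cosh_pos s).ne'
  rw [← pow_two, ← pow_two, Real.cosh_sq_sub_sinh_sq, one_div] at h
  exact h.congr_of_eventuallyEq (.of_forall Real.tanh_eq_sinh_div_cosh)

theorem tanh_pos {s : ℝ} (hs : 0 < s) : 0 < Real.tanh s := by
  rw [Real.tanh_eq_sinh_div_cosh]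
  exact div_pos (Real.sinh_pos_iff.2 hs) (Real.cosh_pos s)

theorem tanh_le_self {s : ℝ} (hs : 0 ≤ s) : Real.tanh s ≤ s := by
  have h_deriv (x : ℝ) : deriv Real.tanh x ≤ 1 := by
    rw [(hasDerivAt_tanh x).deriv]
    exact inv_le_one_of_one_le₀ (one_le_pow₀ (Real.one_le_cosh x))
  simpa using image_sub_le_mul_sub_of_deriv_le
    (fun x => (hasDerivAt_tanh x).differentiableAt) h_deriv hs

theorem mul_inv_cosh_sq_le_tanh {s : ℝ} (hs : 0 ≤ s) : s * (Real.cosh s ^ 2)⁻¹ ≤ Real.tanh s := by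
  have h_cosh := Real.cosh_pos s
  rw [Real.tanh_eq_sinh_div_cosh, ← div_eq_mul_inv, div_le_div_iff₀ (by positivity) h_cosh,
    pow_two, ← mul_assoc]
  gcongr
  exact (Real.self_le_sinh_iff.2 hs).trans
    (le_mul_of_one_le_right (Real.sinh_nonneg_iff.2 hs) (Real.one_le_cosh s))

theorem isMikhlinAt_tanh {s : ℝ} (hs : 0 < s) : IsMikhlinAt Real.tanh (Real.tanh s) s := by
  refine isMikhlinAt_of_hasDerivAt (hasDerivAt_tanh s) (abs_of_pos (tanh_pos hs)).le ?_
  rw [abs_of_nonneg (by positivity)]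
  exact mul_inv_cosh_sq_le_tanh hs.le

end Tanh

section Symbols

variable {d : ℕ} {lam : ℝ} {ξ : Euc d}

theorem jap_pos (x : ℝ) : 0 < jap x := by
  unfold jap
  positivity

theorem le_jap (x : ℝ) : x ≤ jap x :=
  Real.le_sqrt_of_sq_le (by linarith)

theorem jap_le_one_add {x : ℝ} (hx : 0 ≤ x) : jap x ≤ 1 + x :=
  Real.sqrt_le_iff.2 ⟨by positivity, by nlinarith⟩

theorem Ksym_pos (hξ : ξ ≠ 0) : 0 < Ksym ξ :=
  div_pos (tanh_pos (norm_pos_iff.2 hξ)) (norm_pos_iff.2 hξ)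

theorem Ksym_mul_norm (ξ : Euc d) : Ksym ξ * ‖ξ‖ = Real.tanh ‖ξ‖ := by
  rcases eq_or_ne ξ 0 with rfl | hξ
  · simp
  · exact div_mul_cancel₀ _ (norm_ne_zero_iff.2 hξ)

theorem Ksym_le_one (ξ : Euc d) : Ksym ξ ≤ 1 :=
  div_le_one_of_le₀ (tanh_le_self (norm_nonneg ξ)) (norm_nonneg ξ)

theorem norm_mul_sqrt_Ksym_le (ξ : Euc d) : ‖ξ‖ * √(Ksym ξ) ≤ √‖ξ‖ := by
  refine Real.le_sqrt_of_sq_le ?_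
  rcases eq_or_ne ξ 0 with rfl | hξ
  · simp
  · rw [mul_pow, Real.sq_sqrt (Ksym_pos hξ).le, pow_two, mul_assoc, mul_comm ‖ξ‖ (Ksym ξ),
      Ksym_mul_norm]
    exact mul_le_of_le_one_right (norm_nonneg ξ) (Real.tanh_lt_one _).le

theorem sqrt_Ksym_le (hlam : 0 < lam) (hξ : lam / 4 ≤ ‖ξ‖) :
    √(Ksym ξ) ≤ 3 * jap lam ^ (-(1 : ℝ) / 2) := by
  have hξ₀ : ξ ≠ 0 := norm_pos_iff.1 (by linarith)
  have h_jap : jap lam ≤ 1 + 4 * ‖ξ‖ := (jap_le_one_add hlam.le).trans (by linarith)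
  have h_mul : Ksym ξ * jap lam ≤ 3 ^ 2 :=
    calc Ksym ξ * jap lam
      _ ≤ Ksym ξ * (1 + 4 * ‖ξ‖) := mul_le_mul_of_nonneg_left h_jap (Ksym_pos hξ₀).le
      _ = Ksym ξ + 4 * Real.tanh ‖ξ‖ := by rw [← Ksym_mul_norm]; ring
      _ ≤ 3 ^ 2 := by linarith [Ksym_le_one ξ, Real.tanh_lt_one ‖ξ‖]
  rw [neg_div, Real.rpow_neg (jap_pos lam).le, ← Real.sqrt_eq_rpow, ← div_eq_mul_inv,
    le_div_iff₀ (Real.sqrt_pos.2 (jap_pos lam)), ← Real.sqrt_mul (Ksym_pos hξ₀).le]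
  exact Real.sqrt_le_iff.2 ⟨by norm_num, h_mul⟩

theorem isMikhlinAt_sqrt_Ksym (hξ : ξ ≠ 0) :
    IsMikhlinAt (fun ξ : Euc d => √(Ksym ξ)) √(Ksym ξ) ξ := by
  have hs := norm_pos_iff.2 hξ
  have h_quot : IsMikhlinAt (fun s => Real.tanh s / s) (2 * (Real.tanh ‖ξ‖ / ‖ξ‖)) ‖ξ‖ :=
    (isMikhlinAt_tanh hs).mul (isMikhlinAt_inv hs)
  exact (h_quot.sqrt (Ksym_pos hξ)).comp_norm hξ

theorem isMikhlinAt_rzSym (j : Fin d) (hξ : ξ ≠ 0) : IsMikhlinAt (rzSym j) 2 ξ := by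
  have h_coord : ‖(EuclideanSpace.proj j : Euc d →L[ℝ] ℝ)‖ ≤ 1 :=
    ContinuousLinearMap.opNorm_le_bound _ zero_le_one fun η => by
      simpa using PiLp.norm_apply_le η j
  refine ((isMikhlinAt_continuousLinearMap h_coord ξ).mul
    ((isMikhlinAt_inv (norm_pos_iff.2 hξ)).comp_norm hξ)).mono ?_
  rw [mul_inv_cancel₀ (norm_ne_zero_iff.2 hξ), mul_one]

theorem isMikhlinAt_rzSym_mul_sqrt_Ksym (j : Fin d) (hlam : 0 < lam) (hξ : lam / 4 ≤ ‖ξ‖) :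
    IsMikhlinAt (fun ξ => rzSym j ξ * √(Ksym ξ)) (12 * jap lam ^ (-(1 : ℝ) / 2)) ξ := by
  have hξ₀ : ξ ≠ 0 := norm_pos_iff.1 (by linarith)
  exact ((isMikhlinAt_rzSym j hξ₀).mul (isMikhlinAt_sqrt_Ksym hξ₀)).mono
    (by linarith [sqrt_Ksym_le hlam hξ])

end Symbols

section Cutoff

variable {χ : ℝ → ℝ} {s lam A : ℝ} {d : ℕ}

/-- A fattened version of `rho χ`, equal to `1` on the support of `rho χ` in `[0, ∞)`. -/
def fatRho (χ : ℝ → ℝ) (s : ℝ) : ℝ := χ (s / 2) - χ (4 * s)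

namespace IsCutoff

theorem eq_zero_of_two_le (hχ : IsCutoff χ) (hs : 2 ≤ s) : χ s = 0 := by
  have h_closed : IsClosed {t | χ t = 0} := isClosed_eq hχ.1.continuous continuous_const
  have h_Ioi : Set.Ioi (2 : ℝ) ⊆ {t | χ t = 0} := fun t ht => by
    by_contra h_ne
    exact ht.not_ge (hχ.2.2.2.2 h_ne).2
  exact closure_minimal h_Ioi h_closed (closure_Ioi (2 : ℝ) ▸ hs)

theorem continuous_rho (hχ : IsCutoff χ) : Continuous (rho χ) := by
  have := hχ.1.continuous
  unfold rho
  fun_prop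

theorem abs_rho_le_one (hχ : IsCutoff χ) (s : ℝ) : |rho χ s| ≤ 1 :=
  abs_sub_le_iff.2 ⟨by linarith [(hχ.2.2.1 s).2, (hχ.2.2.1 (2 * s)).1],
    by linarith [(hχ.2.2.1 s).1, (hχ.2.2.1 (2 * s)).2]⟩

theorem mem_Icc_of_rho_ne_zero (hχ : IsCutoff χ) (hs : 0 ≤ s) (h : rho χ s ≠ 0) :
    s ∈ Set.Icc (1 / 2) 2 := by
  contrapose! h
  rw [Set.mem_Icc, not_and_or, not_le, not_le] at h
  rcases h with h | h
  · rw [rho, hχ.2.2.2.1 s ⟨by linarith, by linarith⟩,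
      hχ.2.2.2.1 (2 * s) ⟨by linarith, by linarith⟩, sub_self]
  · rw [rho, hχ.eq_zero_of_two_le h.le, hχ.eq_zero_of_two_le (by linarith), sub_self]

theorem fatRho_eq_one (hχ : IsCutoff χ) (hs : s ∈ Set.Icc (1 / 2) 2) : fatRho χ s = 1 := by
  rw [fatRho, hχ.2.2.2.1 (s / 2) ⟨by linarith [hs.1], by linarith [hs.2]⟩,
    hχ.eq_zero_of_two_le (by linarith [hs.1]), sub_zero]

theorem mem_Icc_of_fatRho_ne_zero (hχ : IsCutoff χ) (hs : 0 ≤ s) (h : fatRho χ s ≠ 0) :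
    s ∈ Set.Icc (1 / 4) 4 := by
  contrapose! h
  rw [Set.mem_Icc, not_and_or, not_le, not_le] at h
  rcases h with h | h
  · rw [fatRho, hχ.2.2.2.1 (s / 2) ⟨by linarith, by linarith⟩,
      hχ.2.2.2.1 (4 * s) ⟨by linarith, by linarith⟩, sub_self]
  · rw [fatRho, hχ.eq_zero_of_two_le (by linarith), hχ.eq_zero_of_two_le (by linarith), sub_self]

theorem exists_isMikhlinAt_fatRho (hχ : IsCutoff χ) : ∃ B, ∀ s, IsMikhlinAt (fatRho χ) B s := by
  obtain ⟨B, hB⟩ := exists_isMikhlinAt_of_hasCompactSupport (hχ.1.of_le (by simp)) hχ.2.1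
  refine ⟨B + B, fun s => ?_⟩
  have h_diff := (hB ((2 : ℝ)⁻¹ • s)).comp_smul.sub (hB ((4 : ℝ) • s)).comp_smul
  simp only [smul_eq_mul, inv_mul_eq_div] at h_diff
  exact h_diff

end IsCutoff

theorem isBumpSymbol_ofReal {g : Euc d → ℝ} (hlam : 0 < lam) (hA : 0 ≤ A)
    (hg_low : ∀ ξ, ‖ξ‖ < lam / 4 → g ξ = 0) (hg_high : ∀ ξ, 4 * lam < ‖ξ‖ → g ξ = 0)
    (hg : ∀ ξ, lam / 4 ≤ ‖ξ‖ → IsMikhlinAt g A ξ) :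
    IsBumpSymbol (fun ξ => (g ξ : ℂ)) lam (4 * A) := by
  have h_low (ξ : Euc d) (hξ : ‖ξ‖ < lam / 4) : g =ᶠ[nhds ξ] fun _ => 0 :=
    Filter.eventually_of_mem ((isOpen_lt continuous_norm continuous_const).mem_nhds hξ) hg_low
  have h_diff (ξ : Euc d) : DifferentiableAt ℝ g ξ := by
    rcases lt_or_ge ‖ξ‖ (lam / 4) with hξ | hξ
    · exact (differentiableAt_const 0).congr_of_eventuallyEq (h_low ξ hξ)
    · exact (hg ξ hξ).differentiableAt
  have h_bound (ξ : Euc d) : |g ξ| ≤ A ∧ lam * ‖fderiv ℝ g ξ‖ ≤ 4 * A := by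
    rcases lt_or_ge ‖ξ‖ (lam / 4) with hξ | hξ
    · rw [(h_low ξ hξ).fderiv_eq, (h_low ξ hξ).eq_of_nhds, fderiv_fun_const]
      simpa using hA
    · refine ⟨(hg ξ hξ).abs_le, ?_⟩
      nlinarith [(hg ξ hξ).norm_mul_norm_fderiv_le, norm_nonneg (fderiv ℝ g ξ)]
  refine ⟨fun ξ => Complex.ofRealCLM.differentiableAt.comp ξ (h_diff ξ), fun ξ => ?_,
    fun ξ => ?_, fun ξ hξ => ?_⟩
  · rw [Complex.norm_real, Real.norm_eq_abs]
    linarith [(h_bound ξ).1]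
  · calc lam * ‖fderiv ℝ (Complex.ofRealCLM ∘ g) ξ‖
      _ ≤ lam * (‖Complex.ofRealCLM‖ * ‖fderiv ℝ g ξ‖) := by
        rw [fderiv_comp ξ Complex.ofRealCLM.differentiableAt (h_diff ξ), Complex.ofRealCLM.fderiv]
        gcongr
        exact ContinuousLinearMap.opNorm_comp_le _ _
      _ ≤ 4 * A := by simpa using (h_bound ξ).2
  · rw [mem_closedBall_zero_iff]
    by_contra! h_lt
    exact hξ (by simp [hg_high ξ h_lt])

theorem IsCutoff.exists_isBumpSymbol_mul_fatRho (hχ : IsCutoff χ) :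
    ∃ M : ℝ, 0 ≤ M ∧ ∀ (d : ℕ) (m : Euc d → ℝ) (lam A : ℝ), 0 < lam → 0 ≤ A →
      (∀ ξ, lam / 4 ≤ ‖ξ‖ → IsMikhlinAt m A ξ) →
      IsBumpSymbol (fun ξ => ((m ξ * fatRho χ (‖ξ‖ / lam) : ℝ) : ℂ)) lam (M * A) := by
  obtain ⟨B, hB⟩ := hχ.exists_isMikhlinAt_fatRho
  have hB₀ : 0 ≤ B := (hB 0).nonneg
  refine ⟨8 * B, by positivity, fun d m lam A hlam hA hm => ?_⟩
  have h_supp (ξ : Euc d) (hξ : m ξ * fatRho χ (‖ξ‖ / lam) ≠ 0) :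
      lam / 4 ≤ ‖ξ‖ ∧ ‖ξ‖ ≤ 4 * lam := by
    obtain ⟨h₁, h₂⟩ := hχ.mem_Icc_of_fatRho_ne_zero (by positivity) (right_ne_zero_of_mul hξ)
    rw [le_div_iff₀ hlam] at h₁
    rw [div_le_iff₀ hlam] at h₂
    exact ⟨by linarith, h₂⟩
  have h_mikhlin (ξ : Euc d) (hξ : lam / 4 ≤ ‖ξ‖) :
      IsMikhlinAt (fun ξ => m ξ * fatRho χ (‖ξ‖ / lam)) (2 * (A * B)) ξ := by
    have h_cutoff : IsMikhlinAt (fun s => fatRho χ (s / lam)) B ‖ξ‖ := by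
      simpa only [smul_eq_mul, inv_mul_eq_div] using (hB (lam⁻¹ • ‖ξ‖)).comp_smul
    exact (hm ξ hξ).mul (h_cutoff.comp_norm (norm_pos_iff.1 (by linarith)))
  rw [show 8 * B * A = 4 * (2 * (A * B)) by ring]
  exact isBumpSymbol_ofReal hlam (by positivity)
    (fun ξ hξ => by_contra fun h => hξ.not_ge (h_supp ξ h).1)
    (fun ξ hξ => by_contra fun h => hξ.not_ge (h_supp ξ h).2) h_mikhlin

theorem IsCutoff.rho_ne_zero_of_fourier_proj_ne_zero (hχ : IsCutoff χ) (hlam : 0 < lam)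
    {f : Euc d → ℂ} {ξ : Euc d} (hξ : 𝓕 (proj χ lam f) ξ ≠ 0) : rho χ (‖ξ‖ / lam) ≠ 0 := by
  have h_cont : Continuous fun ξ : Euc d => (rho χ (‖ξ‖ / lam) : ℂ) := by
    have := hχ.continuous_rho
    fun_prop
  have h_supp : HasCompactSupport fun ξ : Euc d => (rho χ (‖ξ‖ / lam) : ℂ) := by
    refine .intro (isCompact_closedBall 0 (2 * lam)) fun η hη => ?_
    by_contra h_ne
    have h_le := (hχ.mem_Icc_of_rho_ne_zero (by positivity) (Complex.ofReal_ne_zero.1 h_ne)).2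
    exact hη (mem_closedBall_zero_iff.2 ((div_le_iff₀ hlam).1 h_le))
  exact Complex.ofReal_ne_zero.1 (symbol_ne_zero_of_fourier_mulOp_ne_zero h_cont h_supp hξ)

theorem IsCutoff.mulOp_proj_eq_mulOp_mul_fatRho (hχ : IsCutoff χ) (hlam : 0 < lam)
    (m : Euc d → ℝ) (f : Euc d → ℂ) :
    mulOp (fun ξ => (m ξ : ℂ)) (proj χ lam f) =
      mulOp (fun ξ => ((m ξ * fatRho χ (‖ξ‖ / lam) : ℝ) : ℂ)) (proj χ lam f) := by
  refine mulOp_congr fun ξ hξ => ?_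
  rw [hχ.fatRho_eq_one (hχ.mem_Icc_of_rho_ne_zero (by positivity)
    (hχ.rho_ne_zero_of_fourier_proj_ne_zero hlam hξ)), mul_one]

end Cutoff

section FixedTime

variable {d : ℕ} {χ : ℝ → ℝ} {lam q : ℝ}

/-- The exponent `r = 2qd/(qd-4)` in the dyadic norm `XlamNorm`. -/
def strichartzExp (d : ℕ) (q : ℝ) : ℝ≥0∞ := ENNReal.ofReal (2 * q * d / (q * d - 4))

/-- The operator `|D| √K P_λ`. -/
def absSqrtKProj (χ : ℝ → ℝ) (lam : ℝ) (f : Euc d → ℂ) : Euc d → ℂ :=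
  mulOp (fun ξ => ((‖ξ‖ * √(Ksym ξ) * rho χ (‖ξ‖ / lam) : ℝ) : ℂ)) f

/-- The `j`-th component of the operator `𝓡 √K`. -/
def rieszSqrtK (j : Fin d) (f : Euc d → ℂ) : Euc d → ℂ :=
  mulOp (fun ξ => ((rzSym j ξ * √(Ksym ξ) : ℝ) : ℂ)) f

/-- The product `𝓡√K f · 𝓡√K g`; it is bilinear, without complex conjugation. -/
def rieszSqrtKDot (f g : Euc d → ℂ) (x : Euc d) : ℂ :=
  ∑ j, rieszSqrtK j f x * rieszSqrtK j g x

theorem rieszSqrtKDot_comm (f g : Euc d → ℂ) : rieszSqrtKDot f g = rieszSqrtKDot g f := by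
  ext x
  simp only [rieszSqrtKDot, mul_comm]

theorem exists_eLpNorm_top_mulOp_le_strichartzExp (hq : 2 < q) (hqd : 4 < q * d) :
    ∃ C : ℝ, 0 ≤ C ∧ ∀ (σ f : Euc d → ℂ) (lam A : ℝ), 0 < lam → IsBumpSymbol σ lam A →
      eLpNorm (mulOp σ f) ∞ ≤
        ENNReal.ofReal (C * A * lam ^ ((d : ℝ) / 2 - 2 / q)) * eLpNorm f (strichartzExp d q) := by
  have hd : (0 : ℝ) < d := by
    by_contra! h
    nlinarith
  have h_triple : Real.HolderTriple (q * d / 2) 2 (2 * q * d / (q * d + 4)) :=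
    ⟨by field_simp; ring, by positivity, two_pos⟩
  have h_conj : Real.HolderTriple (2 * q * d / (q * d - 4)) (2 * q * d / (q * d + 4)) 1 :=
    ⟨by field_simp; ring, by positivity, by positivity⟩
  have : (ENNReal.ofReal (q * d / 2)).HolderTriple 2
      (ENNReal.ofReal (2 * q * d / (q * d + 4))) := by
    simpa using h_triple.ennrealOfReal
  have : (strichartzExp d q).HolderConjugate (ENNReal.ofReal (2 * q * d / (q * d + 4))) := by
    simpa [ENNReal.HolderConjugate, strichartzExp] using h_conj.ennrealOfReal
  have h_exp : (d : ℝ) / (q * d / 2) = 2 / q := by field_simp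
  simpa only [h_exp] using exists_eLpNorm_top_mulOp_le_of_isBumpSymbol (d := d)
    (p := q * d / 2) (by nlinarith) (strichartzExp d q)
    (ENNReal.ofReal (2 * q * d / (q * d + 4)))

theorem IsCutoff.eLpNorm_absSqrtKProj_le (hχ : IsCutoff χ) (hlam : 0 < lam) (f : Euc d → ℂ) :
    eLpNorm (absSqrtKProj χ lam f) 2 ≤
      ENNReal.ofReal (2 * jap lam ^ ((1 : ℝ) / 2)) * eLpNorm f 2 := by
  refine eLpNorm_mulOp_le fun ξ => ?_
  rw [Complex.norm_real, Real.norm_eq_abs, abs_mul, abs_of_nonneg (by positivity)]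
  rcases eq_or_ne (rho χ (‖ξ‖ / lam)) 0 with h_rho | h_rho
  · have := jap_pos lam
    rw [h_rho, abs_zero, mul_zero]
    positivity
  have h_norm : ‖ξ‖ ≤ 2 * lam :=
    (div_le_iff₀ hlam).1 (hχ.mem_Icc_of_rho_ne_zero (by positivity) h_rho).2
  calc ‖ξ‖ * √(Ksym ξ) * |rho χ (‖ξ‖ / lam)|
    _ ≤ √‖ξ‖ :=
      (mul_le_of_le_one_right (by positivity) (hχ.abs_rho_le_one _)).trans
        (norm_mul_sqrt_Ksym_le ξ)
    _ ≤ √(2 ^ 2 * jap lam) := Real.sqrt_le_sqrt (by linarith [le_jap lam])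
    _ = 2 * jap lam ^ ((1 : ℝ) / 2) := by
      rw [Real.sqrt_mul (by positivity), Real.sqrt_sq zero_le_two, Real.sqrt_eq_rpow]

theorem eLpNorm_rieszSqrtKDot_le (f g : Euc d → ℂ) :
    eLpNorm (rieszSqrtKDot f g) 2 ≤
      ∑ j, eLpNorm (rieszSqrtK j f) ∞ * eLpNorm (rieszSqrtK j g) 2 := by
  have h_meas (j : Fin d) (h : Euc d → ℂ) : AEStronglyMeasurable (rieszSqrtK j h) :=
    (continuous_mulOp _ h).aestronglyMeasurable
  calc eLpNorm (rieszSqrtKDot f g) 2 volume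
    _ = eLpNorm (∑ j, rieszSqrtK j f • rieszSqrtK j g) 2 volume := by
      congr 1 with x
      simp [rieszSqrtKDot]
    _ ≤ ∑ j, eLpNorm (rieszSqrtK j f • rieszSqrtK j g) 2 volume :=
      eLpNorm_sum_le (fun j _ => (h_meas j f).smul (h_meas j g)) one_le_two
    _ ≤ ∑ j, eLpNorm (rieszSqrtK j f) ∞ volume * eLpNorm (rieszSqrtK j g) 2 volume :=
      Finset.sum_le_sum fun j _ => eLpNorm_smul_le_eLpNorm_top_mul_eLpNorm 2 (h_meas j g) _

theorem IsCutoff.exists_rieszSqrtK_proj_eq_mulOp (hχ : IsCutoff χ) :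
    ∃ M : ℝ, 0 ≤ M ∧ ∀ {d : ℕ} (j : Fin d) (lam : ℝ), 0 < lam → ∃ σ : Euc d → ℂ,
      IsBumpSymbol σ lam (M * jap lam ^ (-(1 : ℝ) / 2)) ∧
        ∀ f, rieszSqrtK j (proj χ lam f) = mulOp σ (proj χ lam f) := by
  obtain ⟨M, hM, h_symbol⟩ := hχ.exists_isBumpSymbol_mul_fatRho
  refine ⟨M * 12, by positivity, fun j lam hlam => ?_⟩
  have h_jap := jap_pos lam
  have h_bump := h_symbol _ _ lam _ hlam (by positivity) fun ξ hξ =>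
    isMikhlinAt_rzSym_mul_sqrt_Ksym j hlam hξ
  rw [← mul_assoc] at h_bump
  exact ⟨_, h_bump, hχ.mulOp_proj_eq_mulOp_mul_fatRho hlam _⟩

theorem IsCutoff.exists_eLpNorm_rieszSqrtK_proj_le (hχ : IsCutoff χ) :
    ∃ C : ℝ, 0 ≤ C ∧ ∀ {d : ℕ} (j : Fin d) (lam : ℝ) (f : Euc d → ℂ), 0 < lam →
      eLpNorm (rieszSqrtK j (proj χ lam f)) 2 ≤
        ENNReal.ofReal (C * jap lam ^ (-(1 : ℝ) / 2)) * eLpNorm (proj χ lam f) 2 := by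
  obtain ⟨M, hM, h_symbol⟩ := hχ.exists_rieszSqrtK_proj_eq_mulOp
  refine ⟨M, hM, fun j lam f hlam => ?_⟩
  obtain ⟨σ, h_bump, h_eq⟩ := h_symbol j lam hlam
  rw [h_eq]
  exact eLpNorm_mulOp_le h_bump.norm_le

theorem IsCutoff.exists_eLpNorm_top_rieszSqrtK_proj_le (hχ : IsCutoff χ) (hq : 2 < q)
    (hqd : 4 < q * d) :
    ∃ C : ℝ, 0 ≤ C ∧ ∀ (j : Fin d) (lam : ℝ) (f : Euc d → ℂ), 0 < lam →
      eLpNorm (rieszSqrtK j (proj χ lam f)) ∞ ≤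
        ENNReal.ofReal (C * jap lam ^ (-(1 : ℝ) / 2) * lam ^ ((d : ℝ) / 2 - 2 / q)) *
          eLpNorm (proj χ lam f) (strichartzExp d q) := by
  obtain ⟨C, hC, h_bernstein⟩ := exists_eLpNorm_top_mulOp_le_strichartzExp hq hqd
  obtain ⟨M, hM, h_symbol⟩ := hχ.exists_rieszSqrtK_proj_eq_mulOp
  refine ⟨C * M, by positivity, fun j lam f hlam => ?_⟩
  obtain ⟨σ, h_bump, h_eq⟩ := h_symbol j lam hlam
  rw [h_eq, mul_assoc C M]
  exact h_bernstein σ _ lam _ hlam h_bump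

theorem IsCutoff.exists_eLpNorm_absSqrtKProj_rieszSqrtKDot_le (hχ : IsCutoff χ) (hq : 2 < q)
    (hqd : 4 < q * d) :
    ∃ C : ℝ, 0 ≤ C ∧ ∀ lam₀ lam₁ lam₂ : ℝ, 0 < lam₀ → 0 < lam₁ → 0 < lam₂ →
      ∀ f g : Euc d → ℂ,
      eLpNorm (absSqrtKProj χ lam₀ (rieszSqrtKDot (proj χ lam₁ f) (proj χ lam₂ g))) 2 ≤
        ENNReal.ofReal (C * jap lam₀ ^ ((1 : ℝ) / 2) * lam₁ ^ ((d : ℝ) / 2 - 2 / q) *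
            jap lam₁ ^ (-(1 : ℝ) / 2) * jap lam₂ ^ (-(1 : ℝ) / 2)) *
          eLpNorm (proj χ lam₁ f) (strichartzExp d q) * eLpNorm (proj χ lam₂ g) 2 := by
  obtain ⟨B, hB, h_top⟩ := hχ.exists_eLpNorm_top_rieszSqrtK_proj_le hq hqd
  obtain ⟨C, hC, h_two⟩ := hχ.exists_eLpNorm_rieszSqrtK_proj_le
  refine ⟨2 * d * B * C, by positivity, fun lam₀ lam₁ lam₂ h₀ h₁ h₂ f g => ?_⟩
  have hj₀ := jap_pos lam₀
  have hj₁ := jap_pos lam₁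
  set a := B * jap lam₁ ^ (-(1 : ℝ) / 2) * lam₁ ^ ((d : ℝ) / 2 - 2 / q)
  set b := C * jap lam₂ ^ (-(1 : ℝ) / 2)
  set N₁ := eLpNorm (proj χ lam₁ f) (strichartzExp d q)
  set N₂ := eLpNorm (proj χ lam₂ g) 2
  have h_dot : eLpNorm (rieszSqrtKDot (proj χ lam₁ f) (proj χ lam₂ g)) 2 ≤
      d * (ENNReal.ofReal a * N₁ * (ENNReal.ofReal b * N₂)) := by
    refine (eLpNorm_rieszSqrtKDot_le _ _).trans ?_
    simpa using Finset.sum_le_card_nsmul Finset.univ _ _ fun j _ =>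
      mul_le_mul' (h_top j lam₁ f h₁) (h_two j lam₂ g h₂)
  calc eLpNorm (absSqrtKProj χ lam₀ (rieszSqrtKDot (proj χ lam₁ f) (proj χ lam₂ g))) 2 volume
    _ ≤ ENNReal.ofReal (2 * jap lam₀ ^ ((1 : ℝ) / 2)) *
        (d * (ENNReal.ofReal a * N₁ * (ENNReal.ofReal b * N₂))) :=
      (hχ.eLpNorm_absSqrtKProj_le h₀ _).trans (by gcongr)
    _ = ENNReal.ofReal (2 * jap lam₀ ^ ((1 : ℝ) / 2) * d * a * b) * N₁ * N₂ := by
      rw [ENNReal.ofReal_mul (q := b) (by positivity), ENNReal.ofReal_mul (q := a) (by positivity),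
        ENNReal.ofReal_mul (q := d) (by positivity), ENNReal.ofReal_natCast]
      ring
    _ = _ := by
      congr 3
      ring

end FixedTime

section Time

variable {d : ℕ} {χ : ℝ → ℝ} {q : ℝ}

theorem lintegral_le_measure_univ_rpow_mul_lintegral_rpow {α : Type*} [MeasurableSpace α]
    (μ : Measure α) (hq : 1 < q) (A : α → ℝ≥0∞) :
    ∫⁻ t, A t ∂μ ≤ μ Set.univ ^ (1 - 1 / q) * (∫⁻ t, A t ^ q ∂μ) ^ (1 / q) := by
  -- Hölder needs measurability, so it is applied to a minorant with the same integral.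
  obtain ⟨g, hg, hgA, h_eq⟩ := exists_measurable_le_lintegral_eq μ A
  have h_conj := Real.HolderConjugate.conjExponent hq
  have h_exp : q.conjExponent⁻¹ = 1 - q⁻¹ := eq_sub_of_add_eq' h_conj.inv_add_inv_eq_one
  calc ∫⁻ t, A t ∂μ = ∫⁻ t, (g * 1) t ∂μ := by rw [h_eq, mul_one]
    _ ≤ (∫⁻ t, g t ^ q ∂μ) ^ (1 / q) *
        (∫⁻ _, (1 : ℝ≥0∞) ^ q.conjExponent ∂μ) ^ (1 / q.conjExponent) :=
      ENNReal.lintegral_mul_le_Lp_mul_Lq μ h_conj hg.aemeasurable aemeasurable_const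
    _ = μ Set.univ ^ (1 - 1 / q) * (∫⁻ t, g t ^ q ∂μ) ^ (1 / q) := by
      simp only [ENNReal.one_rpow, lintegral_one, one_div, h_exp]
      rw [mul_comm]
    _ ≤ μ Set.univ ^ (1 - 1 / q) * (∫⁻ t, A t ^ q ∂μ) ^ (1 / q) := by
      gcongr with t
      exact hgA t

theorem ae_eLpNorm_proj_le_XlamNorm (χ : ℝ → ℝ) (T q lam : ℝ) (u : ℝ → Euc d → ℂ) :
    ∀ᵐ t ∂volume.restrict (Set.Ioc 0 T),
      eLpNorm (proj χ lam (u t)) 2 ≤ XlamNorm χ T q lam u := by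
  filter_upwards [ae_le_essSup (f := fun t => eLpNorm (proj χ lam (u t)) 2 volume)
    (μ := volume.restrict (Set.Ioc 0 T))] with t ht
  refine ht.trans ?_
  rw [XlamNorm, ← ENNReal.rpow_le_rpow_iff (z := 2) two_pos, ← ENNReal.rpow_mul,
    one_div_mul_cancel two_ne_zero, ENNReal.rpow_one, ENNReal.rpow_two]
  exact le_self_add

theorem lintegral_eLpNorm_proj_rpow_le_XlamNorm (χ : ℝ → ℝ) (T q lam : ℝ)
    (u : ℝ → Euc d → ℂ) :
    (∫⁻ t in Set.Ioc 0 T, eLpNorm (proj χ lam (u t)) (strichartzExp d q) ^ q) ^ (1 / q) ≤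
      ENNReal.ofReal (jap lam ^ (3 / (2 * q))) * XlamNorm χ T q lam u := by
  have h_jap := jap_pos lam
  have h_exp : 3 / (2 * q) * 2 + -3 / q = 0 := by ring
  rw [XlamNorm, ← ENNReal.rpow_le_rpow_iff (z := 2) two_pos,
    ENNReal.mul_rpow_of_nonneg _ _ zero_le_two, ← ENNReal.rpow_mul _ (1 / 2) 2,
    ENNReal.ofReal_rpow_of_pos (by positivity), ← Real.rpow_mul h_jap.le,
    one_div_mul_cancel (two_ne_zero' ℝ), ENNReal.rpow_one, ENNReal.rpow_two]
  refine le_trans (le_of_eq ?_) (mul_le_mul_right le_add_self _)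
  rw [← mul_assoc, ← ENNReal.ofReal_mul (by positivity), ← Real.rpow_add h_jap, h_exp,
    Real.rpow_zero, ENNReal.ofReal_one, one_mul, strichartzExp]

theorem lintegral_eLpNorm_proj_le_XlamNorm {T : ℝ} (hT : 0 < T) (hq : 1 < q) (χ : ℝ → ℝ)
    (lam : ℝ) (u : ℝ → Euc d → ℂ) :
    ∫⁻ t in Set.Ioc 0 T, eLpNorm (proj χ lam (u t)) (strichartzExp d q) ≤
      ENNReal.ofReal (T ^ (1 - 1 / q) * jap lam ^ (3 / (2 * q))) * XlamNorm χ T q lam u := by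
  refine (lintegral_le_measure_univ_rpow_mul_lintegral_rpow _ hq _).trans ?_
  rw [Measure.restrict_apply_univ, Real.volume_Ioc, sub_zero, ENNReal.ofReal_rpow_of_pos hT,
    ENNReal.ofReal_mul (by positivity), mul_assoc]
  gcongr
  exact lintegral_eLpNorm_proj_rpow_le_XlamNorm χ T q lam u

theorem lintegral_le_XlamNorm_mul_XlamNorm {T c : ℝ} (hT : 0 < T) (hq : 1 < q) (hc : 0 ≤ c)
    {lam₁ lam₂ : ℝ} {u v : ℝ → Euc d → ℂ} (hv : XlamNorm χ T q lam₂ v ≠ ∞)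
    {N : ℝ → ℝ≥0∞} (hN : ∀ t, N t ≤ ENNReal.ofReal c *
      eLpNorm (proj χ lam₁ (u t)) (strichartzExp d q) * eLpNorm (proj χ lam₂ (v t)) 2) :
    ∫⁻ t in Set.Ioc 0 T, N t ≤
      ENNReal.ofReal (c * (T ^ (1 - 1 / q) * jap lam₁ ^ (3 / (2 * q)))) *
        XlamNorm χ T q lam₁ u * XlamNorm χ T q lam₂ v := by
  calc ∫⁻ t in Set.Ioc 0 T, N t
    _ ≤ ∫⁻ t in Set.Ioc 0 T, ENNReal.ofReal c * XlamNorm χ T q lam₂ v *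
        eLpNorm (proj χ lam₁ (u t)) (strichartzExp d q) volume := by
      refine lintegral_mono_ae ?_
      filter_upwards [ae_eLpNorm_proj_le_XlamNorm χ T q lam₂ v] with t ht
      rw [mul_right_comm]
      exact (hN t).trans (by gcongr)
    _ = ENNReal.ofReal c * XlamNorm χ T q lam₂ v *
        ∫⁻ t in Set.Ioc 0 T, eLpNorm (proj χ lam₁ (u t)) (strichartzExp d q) volume :=
      lintegral_const_mul' _ _ (ENNReal.mul_ne_top ENNReal.ofReal_ne_top hv)
    _ ≤ ENNReal.ofReal c * XlamNorm χ T q lam₂ v *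
        (ENNReal.ofReal (T ^ (1 - 1 / q) * jap lam₁ ^ (3 / (2 * q))) *
          XlamNorm χ T q lam₁ u) := by
      gcongr
      exact lintegral_eLpNorm_proj_le_XlamNorm hT hq χ lam₁ u
    _ = _ := by
      rw [ENNReal.ofReal_mul hc]
      ring

theorem rpow_mul_jap_rpow_le {x a b : ℝ} (hx : 0 ≤ x) (ha : 0 ≤ a) :
    x ^ a * jap x ^ b ≤ jap x ^ (a + b) := by
  have h_jap := jap_pos x
  rw [Real.rpow_add h_jap]
  gcongr
  exact le_jap x

theorem IsCutoff.exists_lintegral_eLpNorm_rieszSqrtKDot_le (hχ : IsCutoff χ) (hq : 2 < q)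
    (hqd : 4 < q * d) :
    ∃ C > 0, ∀ T lam₀ lam₁ lam₂ : ℝ, 0 < T → 0 < lam₀ → 0 < lam₁ → 0 < lam₂ →
      ∀ u v : ℝ → Euc d → ℂ, XlamNorm χ T q lam₂ v ≠ ∞ →
      ∫⁻ t in Set.Ioc 0 T, eLpNorm
          (absSqrtKProj χ lam₀ (rieszSqrtKDot (proj χ lam₁ (u t)) (proj χ lam₂ (v t)))) 2 ≤
        ENNReal.ofReal (C * T ^ (1 - 1 / q) * jap lam₀ ^ ((1 : ℝ) / 2) *
            jap lam₁ ^ ((d : ℝ) / 2 - 1 / (2 * q)) *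
            jap lam₁ ^ (-(1 : ℝ) / 2) * jap lam₂ ^ (-(1 : ℝ) / 2)) *
          XlamNorm χ T q lam₁ u * XlamNorm χ T q lam₂ v := by
  obtain ⟨C, hC, h_fixed⟩ := hχ.exists_eLpNorm_absSqrtKProj_rieszSqrtKDot_le hq hqd
  refine ⟨C + 1, by positivity, fun T lam₀ lam₁ lam₂ hT h₀ h₁ h₂ u v hv => ?_⟩
  have hj₀ := jap_pos lam₀
  have hj₁ := jap_pos lam₁
  have hj₂ := jap_pos lam₂
  have h_exp : (0 : ℝ) ≤ d / 2 - 2 / q := by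
    rw [sub_nonneg, div_le_div_iff₀ (by linarith) two_pos]
    linarith
  refine (lintegral_le_XlamNorm_mul_XlamNorm hT (by linarith) (by positivity) hv fun t =>
    h_fixed lam₀ lam₁ lam₂ h₀ h₁ h₂ (u t) (v t)).trans ?_
  gcongr ENNReal.ofReal ?_ * _ * _
  set a := jap lam₀ ^ ((1 : ℝ) / 2)
  set b₁ := jap lam₁ ^ (-(1 : ℝ) / 2)
  set b₂ := jap lam₂ ^ (-(1 : ℝ) / 2)
  set τ := T ^ (1 - 1 / q)
  calc C * a * lam₁ ^ ((d : ℝ) / 2 - 2 / q) * b₁ * b₂ * (τ * jap lam₁ ^ (3 / (2 * q)))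
    _ = C * τ * a * (lam₁ ^ ((d : ℝ) / 2 - 2 / q) * jap lam₁ ^ (3 / (2 * q))) * b₁ * b₂ := by
      ring
    _ ≤ (C + 1) * τ * a * jap lam₁ ^ ((d : ℝ) / 2 - 2 / q + 3 / (2 * q)) * b₁ * b₂ := by
      gcongr
      · linarith
      · exact rpow_mul_jap_rpow_le h₁.le h_exp
    _ = (C + 1) * τ * a * jap lam₁ ^ ((d : ℝ) / 2 - 1 / (2 * q)) * b₁ * b₂ := by
      congr 4
      ring

theorem bilinear_dyadic_estimate_two_general (hq : 2 < q) (hqd : 4 < q * d) (hχ : IsCutoff χ) :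
    ∃ C > 0, ∀ T : ℝ, 0 < T → ∀ lam₀ lam₁ lam₂ : ℝ, 0 < lam₀ → 0 < lam₁ → 0 < lam₂ →
      ∀ u v : ℝ → Euc d → ℂ, XlamNorm χ T q lam₁ u ≠ ∞ → XlamNorm χ T q lam₂ v ≠ ∞ →
      ∫⁻ t in Set.Ioc 0 T, eLpNorm
          (absSqrtKProj χ lam₀ (rieszSqrtKDot (proj χ lam₁ (u t)) (proj χ lam₂ (v t)))) 2 ≤
        ENNReal.ofReal (C * T ^ (1 - 1 / q) * jap lam₀ ^ ((1 : ℝ) / 2) *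
            min (jap lam₁) (jap lam₂) ^ ((d : ℝ) / 2 - 1 / (2 * q)) *
            jap lam₁ ^ (-(1 : ℝ) / 2) * jap lam₂ ^ (-(1 : ℝ) / 2)) *
          XlamNorm χ T q lam₁ u * XlamNorm χ T q lam₂ v := by
  obtain ⟨C, hC, h_le⟩ := hχ.exists_lintegral_eLpNorm_rieszSqrtKDot_le hq hqd
  refine ⟨C, hC, fun T hT lam₀ lam₁ lam₂ h₀ h₁ h₂ u v hu hv => ?_⟩
  rcases le_total (jap lam₁) (jap lam₂) with h_jap | h_jap
  · rw [min_eq_left h_jap]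
    exact h_le T lam₀ lam₁ lam₂ hT h₀ h₁ h₂ u v hv
  · rw [min_eq_right h_jap, mul_right_comm (ENNReal.ofReal _),
      mul_right_comm _ (jap lam₁ ^ (-(1 : ℝ) / 2))]
    simp only [rieszSqrtKDot_comm (proj χ lam₁ _)]
    exact h_le T lam₀ lam₂ lam₁ hT h₀ h₂ h₁ v u hu

end Time

/-- Lemma 4, second bilinear dyadic estimate:
`‖|D| √K P_{λ₀} (𝓡√K u_{λ₁} · 𝓡√K v_{λ₂})‖_{L^1_T L^2_x}
≲ T^{1-1/q} ⟨λ₀⟩^{1/2} min(⟨λ₁⟩,⟨λ₂⟩)^{d/2-1/(2q)} ⟨λ₁⟩^{-1/2} ⟨λ₂⟩^{-1/2}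
‖u‖_{X_{λ₁}} ‖v‖_{X_{λ₂}}`, with implicit constant independent of `T` and the
dyadic numbers `λᵢ = 2^{nᵢ}`. -/
theorem bilinear_dyadic_estimate_two
    (d : ℕ) (hd : 2 ≤ d) (q : ℝ) (hq : 2 < q) (χ : ℝ → ℝ) (hχ : IsCutoff χ) :
    ∃ C > 0, ∀ T : ℝ, 0 < T → ∀ n₀ n₁ n₂ : ℤ, ∀ u v : ℝ → Euc d → ℂ,
      XlamNorm χ T q ((2 : ℝ) ^ n₁) u ≠ ⊤ → XlamNorm χ T q ((2 : ℝ) ^ n₂) v ≠ ⊤ →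
      (∫⁻ t in Set.Ioc (0 : ℝ) T,
          eLpNorm (fun x =>
            mulOp (fun ξ =>
                ((‖ξ‖ * Real.sqrt (Ksym ξ) * rho χ (‖ξ‖ / (2 : ℝ) ^ n₀) : ℝ) : ℂ))
              (fun y => ∑ j : Fin d,
                mulOp (fun ξ => ((rzSym j ξ * Real.sqrt (Ksym ξ) : ℝ) : ℂ))
                    (proj χ ((2 : ℝ) ^ n₁) (u t)) y *
                  mulOp (fun ξ => ((rzSym j ξ * Real.sqrt (Ksym ξ) : ℝ) : ℂ))
                    (proj χ ((2 : ℝ) ^ n₂) (v t)) y) x) 2 volume) ≤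
        ENNReal.ofReal (C * T ^ (1 - 1 / q) * jap ((2 : ℝ) ^ n₀) ^ ((1 : ℝ) / 2) *
            min (jap ((2 : ℝ) ^ n₁)) (jap ((2 : ℝ) ^ n₂)) ^ ((d : ℝ) / 2 - 1 / (2 * q)) *
            jap ((2 : ℝ) ^ n₁) ^ (-(1 : ℝ) / 2) * jap ((2 : ℝ) ^ n₂) ^ (-(1 : ℝ) / 2)) *
          XlamNorm χ T q ((2 : ℝ) ^ n₁) u * XlamNorm χ T q ((2 : ℝ) ^ n₂) v := by
  have hqd : 4 < q * d := by
    have : (2 : ℝ) ≤ d := by exact_mod_cast hd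
    nlinarith
  obtain ⟨C, hC, h_le⟩ := bilinear_dyadic_estimate_two_general hq hqd hχ
  exact ⟨C, hC, fun T hT n₀ n₁ n₂ => h_le T hT _ _ _ (zpow_pos two_pos n₀) (zpow_pos two_pos n₁)
    (zpow_pos two_pos n₂)⟩
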